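/- Let H be a real Hilbert space, fix T ≥ 1, ρ > 0, U ≥ 0, and f_1, …, f_T ∈ H with ‖f_t‖² ≤ L for all t, where ρ ≥ max(1, L). For 0 ≤ t ≤ T let V_t be the operator g ↦ Σ_{s=1}^t ⟨f_s, g⟩ f_s (with V_0 = 0) and let K_T be the Gram matrix (K_T)_{ij} = ⟨f_i, f_j⟩. Suppose r_1, …, r_T are nonnegative reals satisfying r_t ≤ 2U ⟨f_t, (ρ·id_H + V_{t-1})^{-1} f_t⟩^{1/2} for every t ∈ {1,…,T}. Then Σ_{t=1}^T r_t ≤ 2U √( 2 T log det(I_T + ρ^{-1} K_T) ). -/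

import Mathlib

open scoped InnerProductSpace

/-!
Bordering the Gram matrix of `f_1, …, f_{t-1}` by `f_t` multiplies `det (1 + ρ⁻¹ K)` by
`1 + x_t`, where `x_t = ⟨f_t, (ρ·id + V_{t-1})⁻¹ f_t⟩`: clearing the new column with the
coordinates `⟨f_i, (ρ·id + V_{t-1})⁻¹ f_t⟩` leaves this number on the diagonal. Hence
`log det (1 + ρ⁻¹ K_T) = ∑ log (1 + x_t)`. As `x_t ≤ ‖f_t‖² / ρ ≤ 2` and
`x ≤ 2 log (1 + x)` on `[0, 2]`, the sum of the `x_t` is at most twice this logarithm, and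
Cauchy–Schwarz bounds the sum of the `√x_t`.
-/

lemma sum_Icc_one_eq_sum_range {M : Type*} [AddCommMonoid M] (F : ℕ → M) (n : ℕ) :
    ∑ t ∈ Finset.Icc 1 n, F t = ∑ t ∈ Finset.range n, F (t + 1) := by
  rw [Finset.range_eq_Ico, Finset.sum_Ico_add' F, zero_add, Finset.Ico_add_one_right_eq_Icc]

lemma sum_sqrt_le_sqrt_card_mul_sum {ι : Type*} (s : Finset ι) {x : ι → ℝ}
    (hx : ∀ i ∈ s, 0 ≤ x i) : ∑ i ∈ s, √(x i) ≤ √(s.card * ∑ i ∈ s, x i) := by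
  apply Real.le_sqrt_of_sq_le
  calc (∑ i ∈ s, √(x i)) ^ 2 ≤ s.card * ∑ i ∈ s, √(x i) ^ 2 := sq_sum_le_card_mul_sum_sq
    _ = s.card * ∑ i ∈ s, x i := by
      rw [Finset.sum_congr rfl fun i hi ↦ Real.sq_sqrt (hx i hi)]

lemma le_two_mul_log_one_add {x : ℝ} (hx₀ : 0 ≤ x) (hx₂ : x ≤ 2) :
    x ≤ 2 * Real.log (1 + x) := by
  have hlog := Real.le_log_one_add_of_nonneg hx₀
  have hfrac : x / 2 ≤ 2 * x / (x + 2) := by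
    rw [div_le_div_iff₀ two_pos (by positivity)]
    nlinarith
  linarith

lemma det_fromBlocks_mul_right {R m n : Type*} [CommRing R] [Fintype m] [Fintype n]
    [DecidableEq m] [DecidableEq n] (A : Matrix m m R) (X : Matrix m n R) (C : Matrix n m R)
    (D : Matrix n n R) :
    (Matrix.fromBlocks A (A * X) C D).det = A.det * (D - C * X).det := by
  have hfactor : Matrix.fromBlocks A (A * X) C D =
      Matrix.fromBlocks A 0 C (D - C * X) * Matrix.fromBlocks 1 X 0 1 := by
    simp [Matrix.fromBlocks_multiply]
  rw [hfactor, Matrix.det_mul, Matrix.det_fromBlocks_zero₁₂, Matrix.det_fromBlocks_zero₂₁]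
  simp

lemma isUnit_of_surjective_of_norm_le {𝕜 E : Type*} [NontriviallyNormedField 𝕜]
    [NormedAddCommGroup E] [NormedSpace 𝕜 E] {A : E →L[𝕜] E} (hA : Function.Surjective A)
    {C : ℝ} (hC : ∀ x, ‖x‖ ≤ C * ‖A x‖) : IsUnit A := by
  have hinj : Function.Injective A := (injective_iff_map_eq_zero A).2 fun x hx ↦ by
    simpa [hx] using hC x
  let e := LinearEquiv.ofBijective A.toLinearMap ⟨hinj, hA⟩
  have he : ∀ y, A (e.symm y) = y := e.apply_symm_apply
  exact ⟨(e.toContinuousLinearEquivOfBounds ‖A‖ C A.le_opNorm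
    fun y ↦ by simpa [he] using hC (e.symm y)).toUnit, rfl⟩

section Ridge

variable (𝕜 : Type*) {E ι : Type*} [RCLike 𝕜] [NormedAddCommGroup E] [InnerProductSpace 𝕜 E]
  [Fintype ι]

/-- The regularized covariance operator `ρ·id + ∑ i, ⟪v i, ·⟫ v i` of a finite family `v`,
the operator `ρ·id_H + V_t` of the paper when `v` is `f_1, …, f_t`. -/
noncomputable def ridgeOperator (ρ : 𝕜) (v : ι → E) : E →L[𝕜] E :=
  ρ • ContinuousLinearMap.id 𝕜 E + ∑ i, InnerProductSpace.rankOne 𝕜 (v i) (v i)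

/-- The squared elliptical norm `⟪w, (ρ·id + V)⁻¹ w⟫` of `w`, where `V` is the covariance operator
of `v`: the quantity under the square root in the bound on each regret. The real part turns it
into a real number over every `𝕜`, and `Ring.inverse` is the true inverse as soon as `0 < ρ`. -/
noncomputable def ridgeLeverage (ρ : ℝ) (v : ι → E) (w : E) : ℝ :=
  RCLike.re ⟪w, Ring.inverse (ridgeOperator 𝕜 (ρ : 𝕜) v) w⟫_𝕜

variable {𝕜}

lemma ridgeOperator_apply (ρ : 𝕜) (v : ι → E) (x : E) :
    ridgeOperator 𝕜 ρ v x = ρ • x + ∑ i, ⟪v i, x⟫_𝕜 • v i := by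
  simp [ridgeOperator]

lemma inner_ridgeOperator_right (ρ : 𝕜) (v : ι → E) (w x : E) :
    ⟪w, ridgeOperator 𝕜 ρ v x⟫_𝕜 = ρ * ⟪w, x⟫_𝕜 + ∑ i, ⟪w, v i⟫_𝕜 * ⟪v i, x⟫_𝕜 := by
  simp [ridgeOperator_apply, inner_add_right, inner_sum, inner_smul_right, mul_comm]

section Determinant

variable [DecidableEq ι]

lemma one_add_smul_gram_mulVec_apply (c : 𝕜) (v : ι → E) (a : ι → 𝕜) (i : ι) :
    (1 + c • Matrix.gram 𝕜 v).mulVec a i = a i + c * ⟪v i, ∑ j, a j • v j⟫_𝕜 := by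
  rw [Matrix.add_mulVec, Matrix.one_mulVec, Matrix.smul_mulVec]
  simp [Matrix.mulVec, dotProduct, inner_sum, inner_smul_right, mul_comm]

lemma one_add_inv_smul_gram_mulVec_inner_apply {ρ : 𝕜} (hρ : ρ ≠ 0) (v : ι → E) (x : E) (i : ι) :
    (1 + ρ⁻¹ • Matrix.gram 𝕜 v).mulVec (fun j ↦ ⟪v j, x⟫_𝕜) i =
      ρ⁻¹ * ⟪v i, ridgeOperator 𝕜 ρ v x⟫_𝕜 := by
  rw [one_add_smul_gram_mulVec_apply, ridgeOperator_apply, inner_add_right, inner_smul_right,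
    mul_add, inv_mul_cancel_left₀ hρ]

lemma det_one_add_inv_smul_gram_sumElim {κ : Type*} [Unique κ] [Fintype κ] [DecidableEq κ]
    {ρ : 𝕜} (hρ : ρ ≠ 0) (v : ι → E) {w g : E}
    (hg : ridgeOperator 𝕜 ρ v g = w) :
    (1 + ρ⁻¹ • Matrix.gram 𝕜 (Sum.elim v fun _ : κ ↦ w)).det =
      (1 + ρ⁻¹ • Matrix.gram 𝕜 v).det * (1 + ⟪w, g⟫_𝕜) := by
  set M := 1 + ρ⁻¹ • Matrix.gram 𝕜 v with hM
  let X : Matrix ι κ 𝕜 := .of fun i _ ↦ ⟪v i, g⟫_𝕜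
  let C : Matrix κ ι 𝕜 := .of fun _ i ↦ ρ⁻¹ * ⟪w, v i⟫_𝕜
  let D : Matrix κ κ 𝕜 := .of fun _ _ ↦ 1 + ρ⁻¹ * ⟪w, w⟫_𝕜
  have hMX (i : ι) (j : κ) : (M * X) i j = ρ⁻¹ * ⟪v i, w⟫_𝕜 :=
    hg ▸ one_add_inv_smul_gram_mulVec_inner_apply hρ v g i
  have hblocks : 1 + ρ⁻¹ • Matrix.gram 𝕜 (Sum.elim v fun _ : κ ↦ w) =
      Matrix.fromBlocks M (M * X) C D := by
    ext (i | i) (j | j)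
    · simp [hM, Matrix.one_apply]
    · simp [hMX]
    · simp [C]
    · simp [D, Subsingleton.elim i j]
  have hcorner : (D - C * X).det = 1 + ⟪w, g⟫_𝕜 := by
    have hinner : ⟪w, w⟫_𝕜 = ρ * ⟪w, g⟫_𝕜 + ∑ i, ⟪w, v i⟫_𝕜 * ⟪v i, g⟫_𝕜 := by
      rw [← inner_ridgeOperator_right, hg]
    simp only [Matrix.det_unique, Matrix.sub_apply, Matrix.mul_apply, Matrix.of_apply, C, D, X,
      hinner, mul_assoc, ← Finset.mul_sum]
    field_simp
    ring
  rw [hblocks, det_fromBlocks_mul_right, hcorner]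

lemma det_one_add_inv_smul_gram_succ {ρ : 𝕜} (hρ : ρ ≠ 0) (f : ℕ → E) (n : ℕ) {g : E}
    (hg : ridgeOperator 𝕜 ρ (fun i : Fin n ↦ f i) g = f n) :
    (1 + ρ⁻¹ • Matrix.gram 𝕜 fun i : Fin (n + 1) ↦ f i).det =
      (1 + ρ⁻¹ • Matrix.gram 𝕜 fun i : Fin n ↦ f i).det * (1 + ⟪f n, g⟫_𝕜) := by
  rw [← det_one_add_inv_smul_gram_sumElim (κ := Fin 1) hρ _ hg,
    ← Matrix.det_submatrix_equiv_self finSumFinEquiv]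
  congr 1
  ext (i | i) (j | j) <;> simp [Matrix.one_apply, Fin.ext_iff, i.2.ne, j.2.ne']

end Determinant

section Positivity

open scoped ComplexOrder

lemma mul_norm_sq_le_re_inner_ridgeOperator (ρ : ℝ) (v : ι → E) (x : E) :
    ρ * ‖x‖ ^ 2 ≤ RCLike.re ⟪ridgeOperator 𝕜 (ρ : 𝕜) v x, x⟫_𝕜 := by
  have hsum := (ContinuousLinearMap.isPositive_sum Finset.univ fun i _ ↦
    InnerProductSpace.isPositive_rankOne_self (𝕜 := 𝕜) (v i)).re_inner_nonneg_left x
  simpa [ridgeOperator, inner_add_left, inner_smul_left] using hsum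

variable {ρ : ℝ}

lemma isPositive_ridgeOperator (hρ : 0 ≤ ρ) (v : ι → E) :
    (ridgeOperator 𝕜 (ρ : 𝕜) v).IsPositive :=
  (ContinuousLinearMap.isPositive_id.smul_of_nonneg (by simpa using hρ)).add
    (ContinuousLinearMap.isPositive_sum _ fun i _ ↦ InnerProductSpace.isPositive_rankOne_self _)

lemma norm_le_inv_mul_norm_ridgeOperator (hρ : 0 < ρ) (v : ι → E) (x : E) :
    ‖x‖ ≤ ρ⁻¹ * ‖ridgeOperator 𝕜 (ρ : 𝕜) v x‖ := by
  obtain rfl | hx := eq_or_ne x 0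
  · simp
  rw [inv_mul_eq_div, le_div_iff₀' hρ]
  refine le_of_mul_le_mul_right ?_ (norm_pos_iff.2 hx)
  calc ρ * ‖x‖ * ‖x‖ = ρ * ‖x‖ ^ 2 := by ring
    _ ≤ RCLike.re ⟪ridgeOperator 𝕜 (ρ : 𝕜) v x, x⟫_𝕜 :=
      mul_norm_sq_le_re_inner_ridgeOperator ρ v x
    _ ≤ ‖ridgeOperator 𝕜 (ρ : 𝕜) v x‖ * ‖x‖ := re_inner_le_norm _ _

lemma posDef_one_add_inv_smul_gram {κ : Type*} [Finite κ] [DecidableEq κ] (hρ : 0 ≤ ρ)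
    (v : κ → E) : (1 + (ρ : 𝕜)⁻¹ • Matrix.gram 𝕜 v).PosDef :=
  Matrix.PosDef.one.add_posSemidef ((Matrix.posSemidef_gram 𝕜 v).smul (by simpa using hρ))

lemma surjective_ridgeOperator (hρ : 0 < ρ) (v : ι → E) :
    Function.Surjective (ridgeOperator 𝕜 (ρ : 𝕜) v) := by
  classical
  intro y
  have hρ' : (ρ : 𝕜) ≠ 0 := by exact_mod_cast hρ.ne'
  obtain ⟨a, ha⟩ := (Matrix.mulVec_surjective_iff_isUnit.2
    (posDef_one_add_inv_smul_gram (𝕜 := 𝕜) hρ.le v).isUnit) fun i ↦ (ρ : 𝕜)⁻¹ * ⟪v i, y⟫_𝕜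
  have hcoord (i : ι) : ⟪v i, (ρ : 𝕜)⁻¹ • (y - ∑ j, a j • v j)⟫_𝕜 = a i := by
    have hai := congrFun ha i
    rw [one_add_smul_gram_mulVec_apply] at hai
    rw [inner_smul_right, inner_sub_right, mul_sub, ← hai, add_sub_cancel_right]
  refine ⟨(ρ : 𝕜)⁻¹ • (y - ∑ j, a j • v j), ?_⟩
  rw [ridgeOperator_apply]
  simp only [hcoord, smul_inv_smul₀ hρ', sub_add_cancel]

lemma isUnit_ridgeOperator (hρ : 0 < ρ) (v : ι → E) : IsUnit (ridgeOperator 𝕜 (ρ : 𝕜) v) :=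
  isUnit_of_surjective_of_norm_le (surjective_ridgeOperator hρ v)
    (norm_le_inv_mul_norm_ridgeOperator hρ v)

lemma ridgeOperator_inverse_apply (hρ : 0 < ρ) (v : ι → E) (w : E) :
    ridgeOperator 𝕜 (ρ : 𝕜) v (Ring.inverse (ridgeOperator 𝕜 (ρ : 𝕜) v) w) = w :=
  DFunLike.congr_fun (Ring.mul_inverse_cancel _ (isUnit_ridgeOperator hρ v)) w

lemma ofReal_ridgeLeverage (hρ : 0 < ρ) (v : ι → E) (w : E) :
    (ridgeLeverage 𝕜 ρ v w : 𝕜) =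
      ⟪w, Ring.inverse (ridgeOperator 𝕜 (ρ : 𝕜) v) w⟫_𝕜 := by
  have hnonneg := (isPositive_ridgeOperator (𝕜 := 𝕜) hρ.le v).inner_nonneg_left
    (Ring.inverse (ridgeOperator 𝕜 (ρ : 𝕜) v) w)
  rw [ridgeOperator_inverse_apply hρ] at hnonneg
  obtain ⟨x, -, hx⟩ := RCLike.nonneg_iff_exists_ofReal.1 hnonneg
  rw [ridgeLeverage, ← hx, RCLike.ofReal_re]

lemma mul_norm_sq_le_ridgeLeverage (hρ : 0 < ρ) (v : ι → E) (w : E) :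
    ρ * ‖Ring.inverse (ridgeOperator 𝕜 (ρ : 𝕜) v) w‖ ^ 2 ≤ ridgeLeverage 𝕜 ρ v w := by
  have hcoercive := mul_norm_sq_le_re_inner_ridgeOperator (𝕜 := 𝕜) ρ v
    (Ring.inverse (ridgeOperator 𝕜 (ρ : 𝕜) v) w)
  rwa [ridgeOperator_inverse_apply hρ] at hcoercive

lemma ridgeLeverage_nonneg (hρ : 0 < ρ) (v : ι → E) (w : E) : 0 ≤ ridgeLeverage 𝕜 ρ v w :=
  (by positivity : (0 : ℝ) ≤ _).trans (mul_norm_sq_le_ridgeLeverage (𝕜 := 𝕜) hρ v w)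

lemma ridgeLeverage_le (hρ : 0 < ρ) (v : ι → E) (w : E) :
    ridgeLeverage 𝕜 ρ v w ≤ ‖w‖ ^ 2 / ρ := by
  set g := Ring.inverse (ridgeOperator 𝕜 (ρ : 𝕜) v) w
  have hnorm : ρ * ‖g‖ ^ 2 ≤ ridgeLeverage 𝕜 ρ v w := mul_norm_sq_le_ridgeLeverage hρ v w
  have hexpand : ‖w - (ρ : 𝕜) • g‖ ^ 2 =
      ‖w‖ ^ 2 - 2 * (ρ * ridgeLeverage 𝕜 ρ v w) + ρ * (ρ * ‖g‖ ^ 2) := by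
    rw [norm_sub_sq (𝕜 := 𝕜), inner_smul_right, RCLike.re_ofReal_mul, norm_smul,
      RCLike.norm_ofReal, mul_pow, sq_abs, ridgeLeverage]
    ring
  rw [le_div_iff₀' hρ]
  -- `0 ≤ ‖w - ρ g‖ ^ 2 ≤ ‖w‖ ^ 2 - ρ ⟪w, g⟫`
  linarith [sq_nonneg ‖w - (ρ : 𝕜) • g‖, mul_le_mul_of_nonneg_left hnorm hρ.le]

end Positivity

section EllipticalPotential

variable {ρ : ℝ}

lemma det_one_add_inv_smul_gram_eq_prod (hρ : 0 < ρ) (f : ℕ → E) (n : ℕ) :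
    (1 + (ρ : 𝕜)⁻¹ • Matrix.gram 𝕜 fun i : Fin n ↦ f i).det =
      ((∏ t ∈ Finset.range n, (1 + ridgeLeverage 𝕜 ρ (fun i : Fin t ↦ f i) (f t)) : ℝ) : 𝕜) := by
  induction n with
  | zero => simp
  | succ n ih =>
    rw [det_one_add_inv_smul_gram_succ (by exact_mod_cast hρ.ne') f n
      (ridgeOperator_inverse_apply hρ _ _), ih, Finset.prod_range_succ, ← ofReal_ridgeLeverage hρ]
    simp

lemma log_re_det_one_add_inv_smul_gram (hρ : 0 < ρ) (f : ℕ → E) (n : ℕ) :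
    Real.log (RCLike.re (1 + (ρ : 𝕜)⁻¹ • Matrix.gram 𝕜 fun i : Fin n ↦ f i).det) =
      ∑ t ∈ Finset.range n, Real.log (1 + ridgeLeverage 𝕜 ρ (fun i : Fin t ↦ f i) (f t)) := by
  rw [det_one_add_inv_smul_gram_eq_prod hρ, RCLike.ofReal_re, Real.log_prod]
  exact fun t _ ↦ (add_pos_of_pos_of_nonneg one_pos (ridgeLeverage_nonneg hρ _ _)).ne'

lemma sum_ridgeLeverage_le_two_mul_log_det (hρ : 0 < ρ) {f : ℕ → E} {n : ℕ}
    (hf : ∀ t < n, ‖f t‖ ^ 2 ≤ 2 * ρ) :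
    ∑ t ∈ Finset.range n, ridgeLeverage 𝕜 ρ (fun i : Fin t ↦ f i) (f t) ≤
      2 * Real.log (RCLike.re (1 + (ρ : 𝕜)⁻¹ • Matrix.gram 𝕜 fun i : Fin n ↦ f i).det) := by
  rw [log_re_det_one_add_inv_smul_gram hρ, Finset.mul_sum]
  refine Finset.sum_le_sum fun t ht ↦ le_two_mul_log_one_add (ridgeLeverage_nonneg hρ _ _) ?_
  exact (ridgeLeverage_le hρ _ _).trans ((div_le_iff₀ hρ).2 (hf t (Finset.mem_range.1 ht)))

lemma sum_sqrt_ridgeLeverage_le (hρ : 0 < ρ) {f : ℕ → E} {n : ℕ}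
    (hf : ∀ t < n, ‖f t‖ ^ 2 ≤ 2 * ρ) :
    ∑ t ∈ Finset.range n, √(ridgeLeverage 𝕜 ρ (fun i : Fin t ↦ f i) (f t)) ≤
      √(2 * n * Real.log
        (RCLike.re (1 + (ρ : 𝕜)⁻¹ • Matrix.gram 𝕜 fun i : Fin n ↦ f i).det)) := by
  refine (sum_sqrt_le_sqrt_card_mul_sum _ fun t _ ↦ ridgeLeverage_nonneg hρ _ _).trans ?_
  rw [Finset.card_range, mul_comm 2, mul_assoc]
  gcongr
  exact sum_ridgeLeverage_le_two_mul_log_det hρ hf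

end EllipticalPotential

end Ridge

theorem regret_aggregation_general
    {𝕜 H : Type*} [RCLike 𝕜] [NormedAddCommGroup H] [InnerProductSpace 𝕜 H]
    (T : ℕ) (U : ℝ) (hU : 0 ≤ U) (f : ℕ → H) (ρ : ℝ) (hρ : 0 < ρ)
    (hf : ∀ t ∈ Finset.Icc 1 T, ‖f t‖ ^ 2 ≤ 2 * ρ)
    (V : ℕ → H →L[𝕜] H)
    (hV : ∀ s, V s = ∑ r ∈ Finset.Icc 1 s, (innerSL 𝕜 (f r)).smulRight (f r))
    (K : Matrix (Fin T) (Fin T) 𝕜)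
    (hK : ∀ i j : Fin T, K i j = ⟪f (i.1 + 1), f (j.1 + 1)⟫_𝕜)
    (r : ℕ → ℝ)
    (hr : ∀ t ∈ Finset.Icc 1 T,
      r t ≤ 2 * U * √(RCLike.re
        ⟪f t, Ring.inverse ((ρ : 𝕜) • ContinuousLinearMap.id 𝕜 H + V (t - 1)) (f t)⟫_𝕜)) :
    ∑ t ∈ Finset.Icc 1 T, r t ≤
      2 * U * √(2 * T * Real.log (RCLike.re (Matrix.det (1 + (ρ : 𝕜)⁻¹ • K)))) := by
  have hmem {t : ℕ} (ht : t < T) : t + 1 ∈ Finset.Icc 1 T := by simp; omega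
  have hridge (n : ℕ) : (ρ : 𝕜) • ContinuousLinearMap.id 𝕜 H + V n =
      ridgeOperator 𝕜 (ρ : 𝕜) fun i : Fin n ↦ f (i + 1) := by
    rw [hV, sum_Icc_one_eq_sum_range, ← Fin.sum_univ_eq_sum_range]
    rfl
  have hgram : K = Matrix.gram 𝕜 fun i : Fin T ↦ f (i + 1) := Matrix.ext hK
  rw [sum_Icc_one_eq_sum_range, hgram]
  calc ∑ t ∈ Finset.range T, r (t + 1)
      ≤ ∑ t ∈ Finset.range T,
          2 * U * √(ridgeLeverage 𝕜 ρ (fun i : Fin t ↦ f (i + 1)) (f (t + 1))) := by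
        refine Finset.sum_le_sum fun t ht ↦ ?_
        simpa only [Nat.add_sub_cancel, hridge, ridgeLeverage] using
          hr (t + 1) (hmem (Finset.mem_range.1 ht))
    _ = 2 * U * ∑ t ∈ Finset.range T,
          √(ridgeLeverage 𝕜 ρ (fun i : Fin t ↦ f (i + 1)) (f (t + 1))) :=
        (Finset.mul_sum ..).symm
    _ ≤ _ := by
        gcongr
        exact sum_sqrt_ridgeLeverage_le (f := fun t ↦ f (t + 1)) hρ fun t ht ↦ hf _ (hmem ht)

/-- Aggregation of instantaneous regrets (Cauchy–Schwarz plus the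
elliptical potential bound): if `0 ≤ r_t ≤ 2U ⟨f_t, (ρ·id + V_{t-1})⁻¹ f_t⟩^{1/2}` for all
`t ∈ {1,…,T}`, with `‖f_t‖² ≤ L` and `ρ ≥ max 1 L`, then
`Σ_{t=1}^T r_t ≤ 2U √(2T log det(I_T + ρ⁻¹K_T))`. -/
theorem regret_aggregation
    {H : Type*} [NormedAddCommGroup H] [InnerProductSpace ℝ H] [CompleteSpace H]
    (T : ℕ) (hT : 1 ≤ T) (U : ℝ) (hU : 0 ≤ U) (L : ℝ) (hL : 0 < L) (f : ℕ → H)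
    (hf : ∀ t ∈ Finset.Icc 1 T, ‖f t‖ ^ 2 ≤ L)
    (ρ : ℝ) (hρ : max 1 L ≤ ρ)
    -- partial covariance operators `V_t g = Σ_{s=1}^t ⟨f_s, g⟩ f_s` (so `V 0 = 0`)
    (V : ℕ → H →L[ℝ] H)
    (hV : ∀ s, V s = ∑ r ∈ Finset.Icc 1 s, (innerSL ℝ (f r)).smulRight (f r))
    -- Gram matrix `(K_T)_{ij} = ⟨f_i, f_j⟩`
    (K : Matrix (Fin T) (Fin T) ℝ)
    (hK : ∀ i j : Fin T, K i j = ⟪f (i.1 + 1), f (j.1 + 1)⟫_ℝ)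
    (r : ℕ → ℝ) (hr_nonneg : ∀ t ∈ Finset.Icc 1 T, 0 ≤ r t)
    (hr : ∀ t ∈ Finset.Icc 1 T,
      r t ≤ 2 * U * Real.sqrt
        ⟪f t, Ring.inverse (ρ • ContinuousLinearMap.id ℝ H + V (t - 1)) (f t)⟫_ℝ) :
    ∑ t ∈ Finset.Icc 1 T, r t ≤
      2 * U * Real.sqrt (2 * T * Real.log (Matrix.det (1 + ρ⁻¹ • K))) := by
  have hρ₀ : 0 < ρ := by linarith [le_max_left 1 L]
  exact regret_aggregation_general T U hU f ρ hρ₀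
    (fun t ht ↦ by linarith [hf t ht, le_max_right 1 L]) V hV K hK r hr
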